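/- arXiv:1510.03267 — 2 statements merged into one kernel-verified Lean document; each statement's English description precedes it below -/
import Mathlib

section
/- Let L be a separately Lipschitz continuous pairwise loss function, P a Borel probability measure on X×Y, and H the RKHS of a bounded measurable kernel k on X. Assume R_{L,P}(f₀) < ∞ for some f₀ ∈ H. Then for every λ > 0 there exists a minimizer f_{L,P,λ} ∈ H of the regularized risk f ↦ R_{L,P}(f) + λ‖f‖_H². -/
open MeasureTheory
open scoped RealInnerProductSpace

/-!
This is the direct method of the calculus of variations. Since the risk is nonnegative, the
objective exceeds its value at `f₀` outside some closed ball, and closed balls of a Hilbert space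
are weakly sequentially compact. Evaluations `f ↦ ⟪f, Φ x⟫` are weakly continuous, so the integrand
of the risk is weakly lower semicontinuous, and Fatou's lemma passes this on to the risk. Fatou's
lemma is a statement about sequences, which is why all semicontinuity below is sequential.
-/

open Filter Set Topology
open scoped ENNReal

theorem liminf_add_liminf_le_liminf_add {ι : Type*} (f : Filter ι) (u v : ι → ℝ≥0∞) :
    liminf u f + liminf v f ≤ liminf (fun i => u i + v i) f := by
  rw [liminf_eq_iSup_iInf (u := u), liminf_eq_iSup_iInf (u := v)]
  refine ENNReal.biSup_add_biSup_le' ⟨univ, univ_mem⟩ ⟨univ, univ_mem⟩ fun s hs t ht => ?_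
  refine le_liminf_of_le (by isBoundedDefault) ?_
  filter_upwards [hs, ht] with i his hit
  exact add_le_add (iInf₂_le i his) (iInf₂_le i hit)

/-- Sequential lower semicontinuity: `J x ≤ lim inf J (u n)` whenever `u n → x`. It is weaker than
`LowerSemicontinuous` on spaces that are not first countable, such as the weak topology of an
infinite-dimensional Hilbert space. -/
def SeqLowerSemicontinuous {E α : Type*} [TopologicalSpace E] [CompleteLattice α]
    (J : E → α) : Prop :=
  ∀ ⦃u : ℕ → E⦄ ⦃x : E⦄, Tendsto u atTop (𝓝 x) → J x ≤ liminf (fun n => J (u n)) atTop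

namespace SeqLowerSemicontinuous

variable {E α : Type*} [TopologicalSpace E]

theorem of_lowerSemicontinuous [CompleteLinearOrder α] {J : E → α} (hJ : LowerSemicontinuous J) :
    SeqLowerSemicontinuous J := fun _ x hu =>
  (hJ.le_liminf x).trans (liminf_le_liminf_of_le hu)

theorem add {J K : E → ℝ≥0∞} (hJ : SeqLowerSemicontinuous J) (hK : SeqLowerSemicontinuous K) :
    SeqLowerSemicontinuous fun x => J x + K x := fun _ _ hu =>
  (add_le_add (hJ hu) (hK hu)).trans (liminf_add_liminf_le_liminf_add _ _ _)

theorem lintegral {Ω : Type*} [MeasurableSpace Ω] {μ : Measure Ω} {F : E → Ω → ℝ≥0∞}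
    (hF_meas : ∀ x, AEMeasurable (F x) μ)
    (hF : ∀ᵐ ω ∂μ, SeqLowerSemicontinuous fun x => F x ω) :
    SeqLowerSemicontinuous fun x => ∫⁻ ω, F x ω ∂μ := fun u x hu =>
  calc ∫⁻ ω, F x ω ∂μ
      ≤ ∫⁻ ω, liminf (fun n => F (u n) ω) atTop ∂μ := lintegral_mono_ae (hF.mono fun _ h => h hu)
    _ ≤ liminf (fun n => ∫⁻ ω, F (u n) ω ∂μ) atTop := lintegral_liminf_le' fun n => hF_meas (u n)

theorem exists_isMinOn [CompleteLinearOrder α] [TopologicalSpace α] [OrderTopology α]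
    [FirstCountableTopology α] {J : E → α} (hJ : SeqLowerSemicontinuous J) {s : Set E}
    (hs : IsSeqCompact s) (hne : s.Nonempty) : ∃ x ∈ s, IsMinOn J s x := by
  obtain ⟨v, -, hv_tendsto, hv_mem⟩ :=
    exists_seq_tendsto_sInf (hne.image J) (OrderBot.bddBelow _)
  choose u hu_mem hu_eq using hv_mem
  obtain ⟨x, hx, φ, hφ, hux⟩ := hs hu_mem
  have hJu : Tendsto (fun n => J (u (φ n))) atTop (𝓝 (sInf (J '' s))) := by
    simpa only [hu_eq, Function.comp_def] using hv_tendsto.comp hφ.tendsto_atTop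
  have hJx : J x ≤ sInf (J '' s) := (hJ hux).trans_eq hJu.liminf_eq
  exact ⟨x, hx, fun y hy => hJx.trans (sInf_le (mem_image_of_mem J hy))⟩

end SeqLowerSemicontinuous

section WeakTopology

variable {𝕜 E : Type*} [RCLike 𝕜]

theorem isClosed_toWeakSpace_image_of_convex [AddCommGroup E] [Module 𝕜 E] [Module ℝ E]
    [IsScalarTower ℝ 𝕜 E] [TopologicalSpace E] [IsTopologicalAddGroup E] [ContinuousSMul 𝕜 E]
    [LocallyConvexSpace ℝ E] {s : Set E} (hs : Convex ℝ s) (hs_closed : IsClosed s) :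
    IsClosed (toWeakSpace 𝕜 E '' s) := by
  rw [← closure_eq_iff_isClosed, ← hs.toWeakSpace_closure 𝕜, hs_closed.closure_eq]

theorem lowerSemicontinuous_comp_toWeakSpace_symm [AddCommGroup E] [Module 𝕜 E] [Module ℝ E]
    [IsScalarTower ℝ 𝕜 E] [TopologicalSpace E] [IsTopologicalAddGroup E] [ContinuousSMul 𝕜 E]
    [LocallyConvexSpace ℝ E] {α : Type*} [LinearOrder α] {J : E → α}
    (hJ : LowerSemicontinuous J) (hJ_convex : QuasiconvexOn ℝ univ J) :
    LowerSemicontinuous (J ∘ (toWeakSpace 𝕜 E).symm) := by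
  refine lowerSemicontinuous_iff_isClosed_preimage.2 fun c => ?_
  rw [preimage_comp, ← LinearEquiv.image_eq_preimage_symm]
  refine isClosed_toWeakSpace_image_of_convex ?_ (hJ.isClosed_preimage c)
  simpa only [mem_univ, true_and, preimage, mem_Iic] using hJ_convex c

variable [NormedAddCommGroup E] [InnerProductSpace 𝕜 E]

theorem continuous_inner_toWeakSpace_symm (v : E) :
    Continuous fun f : WeakSpace 𝕜 E => inner 𝕜 ((toWeakSpace 𝕜 E).symm f) v := by
  have h : Continuous fun f : WeakSpace 𝕜 E => inner 𝕜 v ((toWeakSpace 𝕜 E).symm f) :=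
    WeakBilin.eval_continuous (topDualPairing 𝕜 E).flip (innerSL 𝕜 v)
  simpa only [Function.comp_def, inner_conj_symm] using RCLike.continuous_conj.comp h

variable [CompleteSpace E]

theorem continuous_toWeakSpace_toDual_symm :
    Continuous fun a : WeakDual 𝕜 E =>
      toWeakSpace 𝕜 E ((InnerProductSpace.toDual 𝕜 E).symm a.toStrongDual) := by
  refine WeakBilin.continuous_of_continuous_eval _ fun ψ => ?_
  let v := (InnerProductSpace.toDual 𝕜 E).symm ψ
  have hψ (a : WeakDual 𝕜 E) :
      ψ ((InnerProductSpace.toDual 𝕜 E).symm a.toStrongDual) = starRingEnd 𝕜 (a v) := by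
    rw [← InnerProductSpace.toDual_symm_apply (y := ψ), ← inner_conj_symm,
      InnerProductSpace.toDual_symm_apply, WeakDual.toStrongDual_apply]
  exact (RCLike.continuous_conj.comp (WeakDual.eval_continuous v)).congr fun a => (hψ a).symm

theorem isSeqCompact_toWeakSpace_closedBall_of_separable [TopologicalSpace.SeparableSpace E]
    (x : E) (r : ℝ) : IsSeqCompact (toWeakSpace 𝕜 E '' Metric.closedBall x r) := by
  let D := InnerProductSpace.toDual 𝕜 E
  have hball : (fun a : WeakDual 𝕜 E => D.symm a.toStrongDual) ''
      (WeakDual.toStrongDual ⁻¹' Metric.closedBall (D x) r) = Metric.closedBall x r := by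
    have h := D.symm.image_closedBall (D x) r
    rwa [D.symm_apply_apply] at h
  rw [← hball, image_image]
  exact (WeakDual.isSeqCompact_closedBall 𝕜 E (D x) r).image
    continuous_toWeakSpace_toDual_symm.seqContinuous

theorem isSeqCompact_toWeakSpace_closedBall (x : E) (r : ℝ) :
    IsSeqCompact (toWeakSpace 𝕜 E '' Metric.closedBall x r) := by
  intro u hu
  choose v hv_mem hv_eq using hu
  let K : Submodule 𝕜 E := (Submodule.span 𝕜 (insert x (range v))).topologicalClosure
  have hK (y) (hy : y ∈ insert x (range v)) : y ∈ K :=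
    Submodule.le_topologicalClosure _ (Submodule.subset_span hy)
  have : CompleteSpace K := (Submodule.isClosed_topologicalClosure _).completeSpace_coe
  have : TopologicalSpace.SeparableSpace K := by
    refine TopologicalSpace.IsSeparable.separableSpace ?_
    rw [Submodule.topologicalClosure_coe]
    exact (((countable_range v).insert x).isSeparable.span (R := 𝕜)).closure
  let w (n : ℕ) : K := ⟨v n, hK _ (mem_insert_of_mem x (mem_range_self n))⟩
  have hw (n) : w n ∈ Metric.closedBall (⟨x, hK x (mem_insert x _)⟩ : K) r := hv_mem n
  obtain ⟨_, ⟨y, hy, rfl⟩, φ, hφ, hwy⟩ :=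
    isSeqCompact_toWeakSpace_closedBall_of_separable (𝕜 := 𝕜) _ r
      fun n => mem_image_of_mem _ (hw n)
  refine ⟨toWeakSpace 𝕜 E y, mem_image_of_mem _ hy, φ, hφ, ?_⟩
  have hvy : Tendsto (fun n => toWeakSpace 𝕜 E (v (φ n))) atTop (𝓝 (toWeakSpace 𝕜 E y)) :=
    ((WeakSpace.map K.subtypeL).continuous.tendsto _).comp hwy
  exact hvy.congr fun n => hv_eq (φ n)

end WeakTopology

section Regularization

variable {H : Type*} [NormedAddCommGroup H]

theorem quasiconvexOn_ofReal_mul_norm_sq [NormedSpace ℝ H] {l : ℝ} (hl : 0 ≤ l) :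
    QuasiconvexOn ℝ univ fun f : H => ENNReal.ofReal (l * ‖f‖ ^ 2) := by
  have h : ConvexOn ℝ univ fun f : H => l * ‖f‖ ^ 2 :=
    (convexOn_univ_norm.pow (fun _ _ => norm_nonneg _) 2).smul hl
  exact QuasiconvexOn.monotone_comp (g := ENNReal.ofReal) ENNReal.ofReal_mono h.quasiconvexOn

theorem exists_forall_add_mul_norm_sq_le [InnerProductSpace ℝ H] [CompleteSpace H]
    {R : H → ℝ≥0∞} (hR : SeqLowerSemicontinuous (R ∘ (toWeakSpace ℝ H).symm)) {f₀ : H}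
    (hf₀ : R f₀ < ⊤) {l : ℝ} (hl : 0 < l) :
    ∃ f : H, ∀ g : H, R f + ENNReal.ofReal (l * ‖f‖ ^ 2) ≤ R g + ENNReal.ofReal (l * ‖g‖ ^ 2) := by
  let J (g : H) : ℝ≥0∞ := R g + ENNReal.ofReal (l * ‖g‖ ^ 2)
  have hJ : SeqLowerSemicontinuous (J ∘ (toWeakSpace ℝ H).symm) :=
    hR.add <| .of_lowerSemicontinuous <| lowerSemicontinuous_comp_toWeakSpace_symm
      (ENNReal.continuous_ofReal.comp (by fun_prop)).lowerSemicontinuous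
      (quasiconvexOn_ofReal_mul_norm_sq hl.le)
  have hJ_top : J f₀ ≠ ⊤ := (ENNReal.add_lt_top.2 ⟨hf₀, ENNReal.ofReal_lt_top⟩).ne
  have hJ_coercive (g : H) (hg : J g ≤ J f₀) :
      g ∈ Metric.closedBall (0 : H) √((J f₀).toReal / l) := by
    have hpenalty : l * ‖g‖ ^ 2 ≤ (J f₀).toReal :=
      (ENNReal.ofReal_le_iff_le_toReal hJ_top).1 (le_add_self.trans hg)
    rw [mem_closedBall_zero_iff]
    exact Real.le_sqrt_of_sq_le ((le_div_iff₀' hl).2 hpenalty)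
  obtain ⟨_, ⟨f, -, rfl⟩, hf⟩ := hJ.exists_isMinOn (isSeqCompact_toWeakSpace_closedBall 0 _)
    ⟨_, mem_image_of_mem _ (hJ_coercive f₀ le_rfl)⟩
  have hf_ball (g : H) (hg : J g ≤ J f₀) : J f ≤ J g :=
    hf (mem_image_of_mem _ (hJ_coercive g hg))
  refine ⟨f, fun g => ?_⟩
  rcases le_total (J g) (J f₀) with hg | hg
  exacts [hf_ball g hg, (hf_ball f₀ le_rfl).trans hg]

end Regularization

theorem continuous_of_dist_le_mul_add {α β γ : Type*} [PseudoMetricSpace α] [PseudoMetricSpace β]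
    [PseudoMetricSpace γ] {g : α × β → γ} (C : ℝ)
    (hg : ∀ p q, dist (g p) (g q) ≤ C * (dist p.1 q.1 + dist p.2 q.2)) : Continuous g := by
  refine continuous_iff_continuousAt.2 fun q => tendsto_iff_dist_tendsto_zero.2 ?_
  refine squeeze_zero (fun _ => dist_nonneg) (fun p => hg p q) ?_
  have h : Continuous fun p : α × β => C * (dist p.1 q.1 + dist p.2 q.2) := by fun_prop
  simpa only [dist_self, add_zero, mul_zero] using h.tendsto q

section PairwiseRisk

variable {X Y : Type*} [MeasurableSpace X] [MeasurableSpace Y]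

/-- The risk of the predictor `f` under the pairwise loss `L` when the pair of observations has law
`π`. The risk `R_{L,P}` of the paper is the case `π = P.prod P`. -/
noncomputable def pairwiseRisk (L : X → Y → X → Y → ℝ → ℝ → ℝ≥0∞)
    (π : Measure ((X × Y) × (X × Y))) (f : X → ℝ) : ℝ≥0∞ :=
  ∫⁻ z, L z.1.1 z.1.2 z.2.1 z.2.2 (f z.1.1) (f z.2.1) ∂π

variable {L : X → Y → X → Y → ℝ → ℝ → ℝ≥0∞} {H : Type*} [NormedAddCommGroup H]
  [InnerProductSpace ℝ H] {Φ : X → H}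

theorem seqLowerSemicontinuous_pairwiseRisk
    (hL_meas : Measurable fun p : (X × Y) × (X × Y) × ℝ × ℝ =>
      L p.1.1 p.1.2 p.2.1.1 p.2.1.2 p.2.2.1 p.2.2.2)
    (hL_lsc : ∀ x y x' y', LowerSemicontinuous fun t : ℝ × ℝ => L x y x' y' t.1 t.2)
    (hΦ_meas : ∀ f : H, Measurable fun x => ⟪f, Φ x⟫) (π : Measure ((X × Y) × (X × Y))) :
    SeqLowerSemicontinuous
      ((fun f : H => pairwiseRisk L π fun x => ⟪f, Φ x⟫) ∘ (toWeakSpace ℝ H).symm) := by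
  refine .lintegral (fun f => Measurable.aemeasurable ?_) (ae_of_all _ fun z => ?_)
  · have hf := hΦ_meas ((toWeakSpace ℝ H).symm f)
    exact hL_meas.comp (g := fun p => _) (f := fun z : (X × Y) × (X × Y) => (z.1, z.2, _, _)) <|
      measurable_fst.prodMk <| measurable_snd.prodMk <|
      (hf.comp measurable_fst.fst).prodMk (hf.comp measurable_snd.fst)
  · exact .of_lowerSemicontinuous <| (hL_lsc z.1.1 z.1.2 z.2.1 z.2.2).comp <|
      (continuous_inner_toWeakSpace_symm (Φ z.1.1)).prodMk
        (continuous_inner_toWeakSpace_symm (Φ z.2.1))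

theorem rpl_exists_minimizer_general [CompleteSpace H]
    (hL_meas : Measurable fun p : (X × Y) × (X × Y) × ℝ × ℝ =>
      L p.1.1 p.1.2 p.2.1.1 p.2.1.2 p.2.2.1 p.2.2.2)
    (hL_lsc : ∀ x y x' y', LowerSemicontinuous fun t : ℝ × ℝ => L x y x' y' t.1 t.2)
    (hΦ_meas : ∀ f : H, Measurable fun x => ⟪f, Φ x⟫) (π : Measure ((X × Y) × (X × Y))) {f₀ : H}
    (hf₀ : pairwiseRisk L π (fun x => ⟪f₀, Φ x⟫) < ⊤) {l : ℝ} (hl : 0 < l) :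
    ∃ fmin : H, ∀ g : H,
      pairwiseRisk L π (fun x => ⟪fmin, Φ x⟫) + ENNReal.ofReal (l * ‖fmin‖ ^ 2)
        ≤ pairwiseRisk L π (fun x => ⟪g, Φ x⟫) + ENNReal.ofReal (l * ‖g‖ ^ 2) :=
  exists_forall_add_mul_norm_sq_le
    (seqLowerSemicontinuous_pairwiseRisk hL_meas hL_lsc hΦ_meas π) hf₀ hl

end PairwiseRisk

/-- **Existence of a regularized pairwise learning minimizer.** If `L` is a separately
Lipschitz continuous pairwise loss, `P` a probability measure on `X × Y`, `H` the RKHS of a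
bounded measurable kernel (feature map `Φ`, `‖Φ x‖ ≤ κ`, `f(x) = ⟪f, Φ x⟫`), and the `L`-risk
is finite at some `f₀ ∈ H`, then for every `λ > 0` there is a minimizer of
`f ↦ R_{L,P}(f) + λ‖f‖²_H` over `H`. -/
theorem rpl_exists_minimizer
    {X : Type*} [MeasurableSpace X] {Y : Set ℝ} (hY : IsClosed Y)
    (L : X → Y → X → Y → ℝ → ℝ → ℝ)
    (hL_nonneg : ∀ x y x' y' t t', 0 ≤ L x y x' y' t t')
    (hL_meas : Measurable fun p : (X × Y) × (X × Y) × ℝ × ℝ =>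
      L p.1.1 p.1.2 p.2.1.1 p.2.1.2 p.2.2.1 p.2.2.2)
    (L₁ : ℝ) (hL₁ : 0 ≤ L₁)
    (hLip : ∀ x y x' y' t₁ t₂ s₁ s₂,
      |L x y x' y' t₁ t₂ - L x y x' y' s₁ s₂| ≤ L₁ * (|t₁ - s₁| + |t₂ - s₂|))
    {H : Type*} [NormedAddCommGroup H] [InnerProductSpace ℝ H] [CompleteSpace H]
    (Φ : X → H) (κ : ℝ) (hκ : ∀ x, ‖Φ x‖ ≤ κ)
    (hΦmeas : ∀ f : H, Measurable fun x => ⟪f, Φ x⟫)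
    (P : Measure (X × Y)) [IsProbabilityMeasure P]
    (f₀ : H)
    (hf₀ : (∫⁻ z : (X × Y) × (X × Y), ENNReal.ofReal
        (L z.1.1 z.1.2 z.2.1 z.2.2 ⟪f₀, Φ z.1.1⟫ ⟪f₀, Φ z.2.1⟫) ∂(P.prod P)) < ⊤)
    (l : ℝ) (hl : 0 < l) :
    ∃ fmin : H, ∀ g : H,
      (∫⁻ z : (X × Y) × (X × Y), ENNReal.ofReal
          (L z.1.1 z.1.2 z.2.1 z.2.2 ⟪fmin, Φ z.1.1⟫ ⟪fmin, Φ z.2.1⟫) ∂(P.prod P))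
        + ENNReal.ofReal (l * ‖fmin‖ ^ 2)
      ≤ (∫⁻ z : (X × Y) × (X × Y), ENNReal.ofReal
          (L z.1.1 z.1.2 z.2.1 z.2.2 ⟪g, Φ z.1.1⟫ ⟪g, Φ z.2.1⟫) ∂(P.prod P))
        + ENNReal.ofReal (l * ‖g‖ ^ 2) := by
  have hL_cont (x y x' y') : Continuous fun t : ℝ × ℝ => L x y x' y' t.1 t.2 :=
    continuous_of_dist_le_mul_add L₁ fun t s => hLip x y x' y' t.1 t.2 s.1 s.2
  exact rpl_exists_minimizer_general
    (L := fun x y x' y' t t' => ENNReal.ofReal (L x y x' y' t t')) hL_meas.ennreal_ofReal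
    (fun x y x' y' => (ENNReal.continuous_ofReal.comp (hL_cont x y x' y')).lowerSemicontinuous)
    hΦmeas (P.prod P) hf₀ hl
end

section
/- Under the assumptions of the representer theorem (X complete separable metric, Y ⊆ ℝ closed, k continuous bounded kernel with RKHS H and feature map Φ; L separately Lipschitz, differentiable with continuous, uniformly bounded first and second partial derivatives in the last two arguments, L(x,y,x,y,t,t) = 0), assume additionally that L is convex, so that for each Borel probability measure P the minimizer f_{L★,P,λ} of f ↦ R_{L★,P}(f) + λ‖f‖_H² exists uniquely. Define h_P(x,y,x̃,ỹ) := D₅L(x,y,x̃,ỹ,f_{L★,P,λ}(x),f_{L★,P,λ}(x̃))·Φ(x) + D₆L(x,y,x̃,ỹ,f_{L★,P,λ}(x),f_{L★,P,λ}(x̃))·Φ(x̃) ∈ H. Then for all Borel probability measures P, Q on X×Y: ‖f_{L★,P,λ} − f_{L★,Q,λ}‖_H ≤ (1/λ)·‖ ∫ h_P dP² − ∫ h_P dQ² ‖_H, where the integrals are H-valued Bochner integrals with respect to the product measures P² = P⊗P and Q² = Q⊗Q. -/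
/-!
By differentiation under the integral sign, the risk `R_μ` of the shifted loss has gradient
`∫ h_P dμ` at `f_P`. Minimality of `f_P` forces `∫ h_P dP² = -2 λ f_P`, while convexity of the risk
for `Q²` makes `∫ h_P dQ²` a subgradient of it at `f_P`. Comparing the regularized risks of `f_Q`
and `f_P` and expanding `‖f_Q‖²` around `f_P` then gives
`λ ‖f_Q - f_P‖² ≤ ⟪∫ h_P dP² - ∫ h_P dQ², f_Q - f_P⟫`, and Cauchy–Schwarz concludes.
-/

open MeasureTheory
open scoped RealInnerProductSpace

/-- The shifted risk `R_{L★,P}(f)` of the function `x ↦ ⟪f, Φ x⟫` induced by `f ∈ H`. -/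
noncomputable def shiftedRisk {X : Type*} [MeasurableSpace X] {Y : Set ℝ}
    {H : Type*} [NormedAddCommGroup H] [InnerProductSpace ℝ H]
    (L : X → Y → X → Y → ℝ → ℝ → ℝ) (Φ : X → H)
    (P : Measure (X × Y)) (f : H) : ℝ :=
  ∫ z : (X × Y) × (X × Y),
    (L z.1.1 z.1.2 z.2.1 z.2.2 ⟪f, Φ z.1.1⟫ ⟪f, Φ z.2.1⟫
      - L z.1.1 z.1.2 z.2.1 z.2.2 0 0) ∂(P.prod P)

open scoped Topology

theorem le_sub_of_convexOn_of_hasFDerivAt {E : Type*} [NormedAddCommGroup E] [NormedSpace ℝ E]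
    {s : Set E} {φ : E → ℝ} {φ' : E →L[ℝ] ℝ} {x y : E} (hφ : ConvexOn ℝ s φ)
    (hx : x ∈ s) (hy : y ∈ s) (hφ' : HasFDerivAt φ φ' x) : φ' (y - x) ≤ φ y - φ x := by
  have hline : ConvexOn ℝ (AffineMap.lineMap x y ⁻¹' s) (φ ∘ AffineMap.lineMap (k := ℝ) x y) :=
    hφ.comp_affineMap _
  have hderiv : HasDerivAt (φ ∘ AffineMap.lineMap (k := ℝ) x y) (φ' (y - x)) 0 :=
    HasFDerivAt.comp_hasDerivAt 0 (by simpa using hφ') AffineMap.hasDerivAt_lineMap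
  simpa [slope_def_field] using
    hline.le_slope_of_hasDerivAt (by simpa) (by simpa) zero_lt_one hderiv

theorem stronglyMeasurable_hasFDerivAt_apply {Z 𝕜 E G : Type*} [MeasurableSpace Z]
    [NontriviallyNormedField 𝕜] [NormedAddCommGroup E] [NormedSpace 𝕜 E]
    [NormedAddCommGroup G] [NormedSpace 𝕜 G] {F : Z → E → G} {F' : Z → E →L[𝕜] G} {u : Z → E}
    (hF : ∀ e, StronglyMeasurable fun z => F z (u z + e))
    (hF' : ∀ z, HasFDerivAt (F z) (F' z) (u z)) (d : E) :
    StronglyMeasurable fun z => F' z d :=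
  have hF_base : StronglyMeasurable fun z => F z (u z) := by simpa using hF 0
  stronglyMeasurable_of_tendsto (𝓝[≠] (0 : 𝕜))
    (fun t => ((hF (t • d)).sub hF_base).const_smul t⁻¹)
    (tendsto_pi_nhds.2 fun z => ((hF' z).hasLineDerivAt d).tendsto_slope_zero)

theorem convexOn_integral {Z E : Type*} [MeasurableSpace Z] [AddCommGroup E] [Module ℝ E]
    {μ : Measure Z} {s : Set E} {F : Z → E → ℝ} (hs : Convex ℝ s)
    (hF : ∀ᵐ z ∂μ, ConvexOn ℝ s (F z)) (hint : ∀ x ∈ s, Integrable (F · x) μ) :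
    ConvexOn ℝ s fun x => ∫ z, F z x ∂μ := by
  refine ⟨hs, fun x hx y hy a b ha hb hab => ?_⟩
  have hxa : Integrable (fun z => a • F z x) μ := (hint x hx).smul a
  have hyb : Integrable (fun z => b • F z y) μ := (hint y hy).smul b
  calc ∫ z, F z (a • x + b • y) ∂μ
      ≤ ∫ z, a • F z x + b • F z y ∂μ :=
        integral_mono_ae (hint _ (hs hx hy ha hb hab)) (hxa.add hyb)
          (hF.mono fun z hz => hz.2 hx hy ha hb hab)
    _ = a • ∫ z, F z x ∂μ + b • ∫ z, F z y ∂μ := by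
        rw [integral_add hxa hyb, integral_smul, integral_smul]

section Hilbert

variable {H : Type*} [NormedAddCommGroup H] [InnerProductSpace ℝ H] [CompleteSpace H]

theorem hasGradientAt_integral {Z : Type*} [MeasurableSpace Z] {μ : Measure Z}
    {F : Z → H → ℝ} {h : Z → H} {bound : Z → ℝ} {f : H}
    (hF_meas : ∀ g, AEStronglyMeasurable (F · g) μ) (hF_int : Integrable (F · f) μ)
    (hh : AEStronglyMeasurable h μ)
    (hlip : ∀ᵐ z ∂μ, ∀ g, ‖F z g - F z f‖ ≤ bound z * ‖g - f‖) (hbound : Integrable bound μ)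
    (hgrad : ∀ᵐ z ∂μ, HasGradientAt (F z) (h z) f) :
    HasGradientAt (fun g => ∫ z, F z g ∂μ) (∫ z, h z ∂μ) f := by
  have hdual : AEStronglyMeasurable (fun z => InnerProductSpace.toDual ℝ H (h z)) μ :=
    (InnerProductSpace.toDual ℝ H).continuous.comp_aestronglyMeasurable hh
  obtain ⟨hint, hderiv⟩ := hasFDerivAt_integral_of_dominated_loc_of_lip' Filter.univ_mem
    (fun g _ => hF_meas g) hF_int hdual (hlip.mono fun z hz g _ => hz g) hbound
    (hgrad.mono fun z hz => hz.hasFDerivAt)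
  have hh_int : Integrable h μ :=
    hint.congr' hh (.of_forall fun z => (InnerProductSpace.toDual ℝ H).norm_map (h z))
  refine hasGradientAt_iff_hasFDerivAt.2 (hderiv.congr_fderiv ?_)
  ext d
  rw [ContinuousLinearMap.integral_apply hint]
  simp only [InnerProductSpace.toDual_apply_apply, real_inner_comm d]
  exact integral_inner hh_int d

theorem hasGradientAt_mul_norm_sq (l : ℝ) (f : H) :
    HasGradientAt (fun g : H => l * ‖g‖ ^ 2) ((2 * l) • f) f := by
  refine hasGradientAt_iff_hasFDerivAt.2
    (((hasStrictFDerivAt_norm_sq f).hasFDerivAt.const_mul l).congr_fderiv ?_)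
  ext d
  simp only [smul_apply, coe_innerSL_apply, nsmul_eq_mul, Nat.cast_ofNat, smul_eq_mul, map_smul,
    InnerProductSpace.toDual_apply_apply]
  ring

theorem eq_neg_smul_of_isLocalMin_add_mul_norm_sq {R : H → ℝ} {u f : H} {l : ℝ}
    (hR : HasGradientAt R u f) (hf : IsLocalMin (fun g => R g + l * ‖g‖ ^ 2) f) :
    u = -((2 * l) • f) := by
  have hzero := hf.hasFDerivAt_eq_zero
    (hR.hasFDerivAt.add (hasGradientAt_mul_norm_sq l f).hasFDerivAt)
  rw [← map_add, map_eq_zero_iff _ (InnerProductSpace.toDual ℝ H).injective] at hzero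
  exact eq_neg_of_add_eq_zero_left hzero

theorem norm_sub_le_of_isLocalMin_add_mul_norm_sq {R S : H → ℝ} {u v f g : H} {l : ℝ}
    (hl : 0 < l) (hR : HasGradientAt R u f)
    (hf : IsLocalMin (fun g => R g + l * ‖g‖ ^ 2) f) (hS_convex : ConvexOn ℝ Set.univ S)
    (hS : HasGradientAt S v f) (hg : S g + l * ‖g‖ ^ 2 ≤ S f + l * ‖f‖ ^ 2) :
    ‖f - g‖ ≤ 1 / l * ‖u - v‖ := by
  have hu : ⟪u, g - f⟫ = -(2 * l * ⟪f, g - f⟫) := by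
    rw [eq_neg_smul_of_isLocalMin_add_mul_norm_sq hR hf, inner_neg_left, real_inner_smul_left]
  have hv : ⟪v, g - f⟫ ≤ S g - S f :=
    le_sub_of_convexOn_of_hasFDerivAt hS_convex trivial trivial hS.hasFDerivAt
  have hsq : ‖g‖ ^ 2 = ‖f‖ ^ 2 + 2 * ⟪f, g - f⟫ + ‖g - f‖ ^ 2 := by
    rw [← norm_add_sq_real, add_sub_cancel]
  have hmul : l * ‖g - f‖ * ‖g - f‖ ≤ ‖u - v‖ * ‖g - f‖ :=
    calc l * ‖g - f‖ * ‖g - f‖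
        = l * ‖g‖ ^ 2 - l * ‖f‖ ^ 2 - 2 * l * ⟪f, g - f⟫ := by rw [hsq]; ring
      _ ≤ ⟪u, g - f⟫ - ⟪v, g - f⟫ := by linarith
      _ = ⟪u - v, g - f⟫ := (inner_sub_left _ _ _).symm
      _ ≤ ‖u - v‖ * ‖g - f‖ := real_inner_le_norm _ _
  rw [norm_sub_rev, one_div_mul_eq_div, le_div_iff₀' hl]
  rcases (norm_nonneg (g - f)).eq_or_lt with h | h
  · simp [← h]
  · exact le_of_mul_le_mul_right hmul h

end Hilbert

section PairwiseLoss

variable {X Y H : Type*} [NormedAddCommGroup H] [InnerProductSpace ℝ H]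

/-- The shifted pairwise loss `L★(x, y, x̃, ỹ, f(x), f(x̃))` at a pair `z = ((x, y), (x̃, ỹ))` of
observations, as a function of the element `f` of the feature space. -/
def shiftedLoss (L : X → Y → X → Y → ℝ → ℝ → ℝ) (Φ : X → H) (z : (X × Y) × (X × Y)) (f : H) : ℝ :=
  L z.1.1 z.1.2 z.2.1 z.2.2 ⟪f, Φ z.1.1⟫ ⟪f, Φ z.2.1⟫ - L z.1.1 z.1.2 z.2.1 z.2.2 0 0

/-- The function `h_P` of the representer theorem, with `f` in place of `f_{L★,P,λ}`; `D₅L` and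
`D₆L` stand for the partial derivatives of the loss in its last two arguments. -/
def lossGradient (D₅L D₆L : X → Y → X → Y → ℝ → ℝ → ℝ) (Φ : X → H) (f : H)
    (z : (X × Y) × (X × Y)) : H :=
  D₅L z.1.1 z.1.2 z.2.1 z.2.2 ⟪f, Φ z.1.1⟫ ⟪f, Φ z.2.1⟫ • Φ z.1.1
    + D₆L z.1.1 z.1.2 z.2.1 z.2.2 ⟪f, Φ z.1.1⟫ ⟪f, Φ z.2.1⟫ • Φ z.2.1

variable {L D₅L D₆L : X → Y → X → Y → ℝ → ℝ → ℝ} {Φ : X → H} {L₁ κ : ℝ}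

theorem norm_shiftedLoss_sub_le (hL₁ : 0 ≤ L₁)
    (hLip : ∀ x y x' y' t₁ t₂ s₁ s₂,
      |L x y x' y' t₁ t₂ - L x y x' y' s₁ s₂| ≤ L₁ * (|t₁ - s₁| + |t₂ - s₂|))
    (hκ : ∀ x, ‖Φ x‖ ≤ κ) (z : (X × Y) × (X × Y)) (f g : H) :
    ‖shiftedLoss L Φ z g - shiftedLoss L Φ z f‖ ≤ 2 * L₁ * κ * ‖g - f‖ := by
  have heval (x : X) : |⟪g, Φ x⟫ - ⟪f, Φ x⟫| ≤ ‖g - f‖ * κ := by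
    rw [← inner_sub_left]
    exact (abs_real_inner_le_norm _ _).trans (by gcongr; exact hκ x)
  calc ‖shiftedLoss L Φ z g - shiftedLoss L Φ z f‖
      ≤ L₁ * (|⟪g, Φ z.1.1⟫ - ⟪f, Φ z.1.1⟫| + |⟪g, Φ z.2.1⟫ - ⟪f, Φ z.2.1⟫|) := by
        simpa [shiftedLoss] using hLip z.1.1 z.1.2 z.2.1 z.2.2 _ _ _ _
    _ ≤ L₁ * (‖g - f‖ * κ + ‖g - f‖ * κ) := by gcongr <;> apply heval
    _ = 2 * L₁ * κ * ‖g - f‖ := by ring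

theorem convexOn_shiftedLoss
    (hconvex : ∀ x y x' y', ConvexOn ℝ Set.univ fun t : ℝ × ℝ => L x y x' y' t.1 t.2)
    (z : (X × Y) × (X × Y)) : ConvexOn ℝ Set.univ (shiftedLoss L Φ z) :=
  ConvexOn.add_const ((hconvex z.1.1 z.1.2 z.2.1 z.2.2).comp_linearMap
    (((innerₗ H).flip (Φ z.1.1)).prod ((innerₗ H).flip (Φ z.2.1)))) (-L z.1.1 z.1.2 z.2.1 z.2.2 0 0)

theorem hasGradientAt_shiftedLoss [CompleteSpace H]
    (hderiv : ∀ x y x' y' t t', HasFDerivAt (fun p : ℝ × ℝ => L x y x' y' p.1 p.2)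
      (D₅L x y x' y' t t' • ContinuousLinearMap.fst ℝ ℝ ℝ
        + D₆L x y x' y' t t' • ContinuousLinearMap.snd ℝ ℝ ℝ) (t, t'))
    (z : (X × Y) × (X × Y)) (f : H) :
    HasGradientAt (shiftedLoss L Φ z) (lossGradient D₅L D₆L Φ f z) f := by
  have heval (x : X) : HasFDerivAt (fun g : H => ⟪g, Φ x⟫) (innerSL ℝ (Φ x)) f :=
    (innerSL ℝ (Φ x)).hasFDerivAt.congr_of_eventuallyEq (.of_forall fun _ => real_inner_comm _ _)
  have hcomp := ((hderiv z.1.1 z.1.2 z.2.1 z.2.2 _ _).comp f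
    ((heval z.1.1).prodMk (heval z.2.1))).sub_const (L z.1.1 z.1.2 z.2.1 z.2.2 0 0)
  refine hasGradientAt_iff_hasFDerivAt.2 (hcomp.congr_fderiv ?_)
  ext d
  simp [lossGradient]

variable [MeasurableSpace X] [MeasurableSpace Y]

theorem measurable_loss_comp
    (hL : Measurable fun p : (X × Y) × (X × Y) × ℝ × ℝ =>
      L p.1.1 p.1.2 p.2.1.1 p.2.1.2 p.2.2.1 p.2.2.2)
    {u v : (X × Y) × (X × Y) → ℝ} (hu : Measurable u) (hv : Measurable v) :
    Measurable fun z : (X × Y) × (X × Y) => L z.1.1 z.1.2 z.2.1 z.2.2 (u z) (v z) :=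
  hL.comp (measurable_fst.prodMk (measurable_snd.prodMk (hu.prodMk hv)))

theorem measurable_inner_feature_pair (hΦ : StronglyMeasurable Φ) (f : H) :
    (Measurable fun z : (X × Y) × (X × Y) => ⟪f, Φ z.1.1⟫) ∧
      Measurable fun z : (X × Y) × (X × Y) => ⟪f, Φ z.2.1⟫ := by
  have hfΦ : Measurable fun x => ⟪f, Φ x⟫ := (stronglyMeasurable_const.inner hΦ).measurable
  exact ⟨hfΦ.comp (by fun_prop), hfΦ.comp (by fun_prop)⟩

theorem measurable_shiftedLoss
    (hL : Measurable fun p : (X × Y) × (X × Y) × ℝ × ℝ =>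
      L p.1.1 p.1.2 p.2.1.1 p.2.1.2 p.2.2.1 p.2.2.2)
    (hΦ : StronglyMeasurable Φ) (f : H) :
    Measurable fun z : (X × Y) × (X × Y) => shiftedLoss L Φ z f :=
  have ⟨hu, hv⟩ := measurable_inner_feature_pair hΦ f
  (measurable_loss_comp hL hu hv).sub
    (measurable_loss_comp hL measurable_const measurable_const)

theorem stronglyMeasurable_lossGradient
    (hL : Measurable fun p : (X × Y) × (X × Y) × ℝ × ℝ =>
      L p.1.1 p.1.2 p.2.1.1 p.2.1.2 p.2.2.1 p.2.2.2)
    (hderiv : ∀ x y x' y' t t', HasFDerivAt (fun p : ℝ × ℝ => L x y x' y' p.1 p.2)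
      (D₅L x y x' y' t t' • ContinuousLinearMap.fst ℝ ℝ ℝ
        + D₆L x y x' y' t t' • ContinuousLinearMap.snd ℝ ℝ ℝ) (t, t'))
    (hΦ : StronglyMeasurable Φ) (f : H) :
    StronglyMeasurable (lossGradient D₅L D₆L Φ f) := by
  obtain ⟨hu, hv⟩ := measurable_inner_feature_pair (Y := Y) hΦ f
  have hpartial := stronglyMeasurable_hasFDerivAt_apply
    (u := fun z : (X × Y) × (X × Y) => (⟪f, Φ z.1.1⟫, ⟪f, Φ z.2.1⟫))
    (fun e => (measurable_loss_comp hL (hu.add_const e.1) (hv.add_const e.2)).stronglyMeasurable)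
    (fun z => hderiv z.1.1 z.1.2 z.2.1 z.2.2 _ _)
  have hD₅ : StronglyMeasurable fun z : (X × Y) × (X × Y) =>
      D₅L z.1.1 z.1.2 z.2.1 z.2.2 ⟪f, Φ z.1.1⟫ ⟪f, Φ z.2.1⟫ := by
    simpa using hpartial (1, 0)
  have hD₆ : StronglyMeasurable fun z : (X × Y) × (X × Y) =>
      D₆L z.1.1 z.1.2 z.2.1 z.2.2 ⟪f, Φ z.1.1⟫ ⟪f, Φ z.2.1⟫ := by
    simpa using hpartial (0, 1)
  exact (hD₅.smul (hΦ.comp_measurable (by fun_prop))).add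
    (hD₆.smul (hΦ.comp_measurable (by fun_prop)))

theorem integrable_shiftedLoss
    (hL : Measurable fun p : (X × Y) × (X × Y) × ℝ × ℝ =>
      L p.1.1 p.1.2 p.2.1.1 p.2.1.2 p.2.2.1 p.2.2.2)
    (hL₁ : 0 ≤ L₁)
    (hLip : ∀ x y x' y' t₁ t₂ s₁ s₂,
      |L x y x' y' t₁ t₂ - L x y x' y' s₁ s₂| ≤ L₁ * (|t₁ - s₁| + |t₂ - s₂|))
    (hΦ : StronglyMeasurable Φ) (hκ : ∀ x, ‖Φ x‖ ≤ κ)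
    (μ : Measure ((X × Y) × (X × Y))) [IsFiniteMeasure μ] (f : H) :
    Integrable (fun z => shiftedLoss L Φ z f) μ :=
  .of_bound (measurable_shiftedLoss hL hΦ f).aestronglyMeasurable (2 * L₁ * κ * ‖f‖)
    (.of_forall fun z => by simpa [shiftedLoss] using norm_shiftedLoss_sub_le hL₁ hLip hκ z 0 f)

theorem hasGradientAt_integral_shiftedLoss [CompleteSpace H]
    (hL : Measurable fun p : (X × Y) × (X × Y) × ℝ × ℝ =>
      L p.1.1 p.1.2 p.2.1.1 p.2.1.2 p.2.2.1 p.2.2.2)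
    (hL₁ : 0 ≤ L₁)
    (hLip : ∀ x y x' y' t₁ t₂ s₁ s₂,
      |L x y x' y' t₁ t₂ - L x y x' y' s₁ s₂| ≤ L₁ * (|t₁ - s₁| + |t₂ - s₂|))
    (hderiv : ∀ x y x' y' t t', HasFDerivAt (fun p : ℝ × ℝ => L x y x' y' p.1 p.2)
      (D₅L x y x' y' t t' • ContinuousLinearMap.fst ℝ ℝ ℝ
        + D₆L x y x' y' t t' • ContinuousLinearMap.snd ℝ ℝ ℝ) (t, t'))
    (hΦ : StronglyMeasurable Φ) (hκ : ∀ x, ‖Φ x‖ ≤ κ)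
    (μ : Measure ((X × Y) × (X × Y))) [IsFiniteMeasure μ] (f : H) :
    HasGradientAt (fun g => ∫ z, shiftedLoss L Φ z g ∂μ)
      (∫ z, lossGradient D₅L D₆L Φ f z ∂μ) f :=
  hasGradientAt_integral (fun g => (measurable_shiftedLoss hL hΦ g).aestronglyMeasurable)
    (integrable_shiftedLoss hL hL₁ hLip hΦ hκ μ f)
    (stronglyMeasurable_lossGradient hL hderiv hΦ f).aestronglyMeasurable
    (.of_forall fun z g => norm_shiftedLoss_sub_le hL₁ hLip hκ z f g) (integrable_const _)
    (.of_forall fun z => hasGradientAt_shiftedLoss hderiv z f)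

theorem rpl_representer_stability_general [CompleteSpace H]
    (hL : Measurable fun p : (X × Y) × (X × Y) × ℝ × ℝ =>
      L p.1.1 p.1.2 p.2.1.1 p.2.1.2 p.2.2.1 p.2.2.2)
    (hL₁ : 0 ≤ L₁)
    (hLip : ∀ x y x' y' t₁ t₂ s₁ s₂,
      |L x y x' y' t₁ t₂ - L x y x' y' s₁ s₂| ≤ L₁ * (|t₁ - s₁| + |t₂ - s₂|))
    (hderiv : ∀ x y x' y' t t', HasFDerivAt (fun p : ℝ × ℝ => L x y x' y' p.1 p.2)
      (D₅L x y x' y' t t' • ContinuousLinearMap.fst ℝ ℝ ℝ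
        + D₆L x y x' y' t t' • ContinuousLinearMap.snd ℝ ℝ ℝ) (t, t'))
    (hΦ : StronglyMeasurable Φ) (hκ : ∀ x, ‖Φ x‖ ≤ κ)
    (hconvex : ∀ x y x' y', ConvexOn ℝ Set.univ fun t : ℝ × ℝ => L x y x' y' t.1 t.2)
    {l : ℝ} (hl : 0 < l) {μ ν : Measure ((X × Y) × (X × Y))} [IsFiniteMeasure μ]
    [IsFiniteMeasure ν] {f g : H}
    (hf : ∀ d, (∫ z, shiftedLoss L Φ z f ∂μ) + l * ‖f‖ ^ 2
      ≤ (∫ z, shiftedLoss L Φ z d ∂μ) + l * ‖d‖ ^ 2)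
    (hg : (∫ z, shiftedLoss L Φ z g ∂ν) + l * ‖g‖ ^ 2
      ≤ (∫ z, shiftedLoss L Φ z f ∂ν) + l * ‖f‖ ^ 2) :
    ‖f - g‖ ≤ 1 / l *
      ‖(∫ z, lossGradient D₅L D₆L Φ f z ∂μ) - ∫ z, lossGradient D₅L D₆L Φ f z ∂ν‖ :=
  have hrisk_convex : ConvexOn ℝ Set.univ fun d => ∫ z, shiftedLoss L Φ z d ∂ν :=
    convexOn_integral convex_univ (.of_forall (convexOn_shiftedLoss hconvex))
      fun d _ => integrable_shiftedLoss hL hL₁ hLip hΦ hκ ν d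
  norm_sub_le_of_isLocalMin_add_mul_norm_sq hl
    (hasGradientAt_integral_shiftedLoss hL hL₁ hLip hderiv hΦ hκ μ f) (.of_forall hf)
    hrisk_convex (hasGradientAt_integral_shiftedLoss hL hL₁ hLip hderiv hΦ hκ ν f) hg

end PairwiseLoss

/-- **Stability part of the representer theorem.** Under Assumption 1 of the paper and
convexity of the loss, for all probability measures `P`, `Q` with (unique) minimizers
`fP`, `fQ` of the regularized shifted risks, one has
`‖fP - fQ‖_H ≤ (1/λ) ‖∫ h_P dP² - ∫ h_P dQ²‖_H`, where
`h_P(x,y,x̃,ỹ) = D₅L(…,fP(x),fP(x̃)) Φ(x) + D₆L(…,fP(x),fP(x̃)) Φ(x̃)`. -/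
theorem rpl_representer_stability
    {X : Type*} [MeasurableSpace X] [MetricSpace X] [CompleteSpace X]
    [TopologicalSpace.SeparableSpace X] [BorelSpace X]
    {Y : Set ℝ} (hY : IsClosed Y)
    (L D₅L D₆L D₅₅L D₅₆L D₆₅L D₆₆L : X → Y → X → Y → ℝ → ℝ → ℝ)
    (hL_nonneg : ∀ x y x' y' t t', 0 ≤ L x y x' y' t t')
    (hL_meas : Measurable fun p : (X × Y) × (X × Y) × ℝ × ℝ =>
      L p.1.1 p.1.2 p.2.1.1 p.2.1.2 p.2.2.1 p.2.2.2)
    (L₁ : ℝ) (hL₁ : 0 ≤ L₁)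
    (hLip : ∀ x y x' y' t₁ t₂ s₁ s₂,
      |L x y x' y' t₁ t₂ - L x y x' y' s₁ s₂| ≤ L₁ * (|t₁ - s₁| + |t₂ - s₂|))
    (hderiv : ∀ x y x' y' t t', HasFDerivAt (fun p : ℝ × ℝ => L x y x' y' p.1 p.2)
      ((D₅L x y x' y' t t') • ContinuousLinearMap.fst ℝ ℝ ℝ
        + (D₆L x y x' y' t t') • ContinuousLinearMap.snd ℝ ℝ ℝ) (t, t'))
    (hderiv₅ : ∀ x y x' y' t t', HasFDerivAt (fun p : ℝ × ℝ => D₅L x y x' y' p.1 p.2)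
      ((D₅₅L x y x' y' t t') • ContinuousLinearMap.fst ℝ ℝ ℝ
        + (D₆₅L x y x' y' t t') • ContinuousLinearMap.snd ℝ ℝ ℝ) (t, t'))
    (hderiv₆ : ∀ x y x' y' t t', HasFDerivAt (fun p : ℝ × ℝ => D₆L x y x' y' p.1 p.2)
      ((D₅₆L x y x' y' t t') • ContinuousLinearMap.fst ℝ ℝ ℝ
        + (D₆₆L x y x' y' t t') • ContinuousLinearMap.snd ℝ ℝ ℝ) (t, t'))
    (hcont₁ : ∀ x y x' y', Continuous (fun p : ℝ × ℝ => D₅L x y x' y' p.1 p.2) ∧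
      Continuous (fun p : ℝ × ℝ => D₆L x y x' y' p.1 p.2))
    (hcont₂ : ∀ x y x' y', Continuous (fun p : ℝ × ℝ => D₅₅L x y x' y' p.1 p.2) ∧
      Continuous (fun p : ℝ × ℝ => D₅₆L x y x' y' p.1 p.2) ∧
      Continuous (fun p : ℝ × ℝ => D₆₅L x y x' y' p.1 p.2) ∧
      Continuous (fun p : ℝ × ℝ => D₆₆L x y x' y' p.1 p.2))
    (cL₁ cL₂ : ℝ) (hcL₁ : 0 < cL₁) (hcL₂ : 0 < cL₂)
    (hbd₁ : ∀ x y x' y' t t', |D₅L x y x' y' t t'| ≤ cL₁ ∧ |D₆L x y x' y' t t'| ≤ cL₁)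
    (hbd₂ : ∀ x y x' y' t t', |D₅₅L x y x' y' t t'| ≤ cL₂ ∧ |D₅₆L x y x' y' t t'| ≤ cL₂ ∧
      |D₆₅L x y x' y' t t'| ≤ cL₂ ∧ |D₆₆L x y x' y' t t'| ≤ cL₂)
    (hzero : ∀ (x : X) (y : Y) (t : ℝ), L x y x y t t = 0)
    {H : Type*} [NormedAddCommGroup H] [InnerProductSpace ℝ H] [CompleteSpace H]
    (Φ : X → H) (hΦcont : Continuous Φ) (κ : ℝ) (hκ : ∀ x, ‖Φ x‖ ≤ κ)
    (hL_convex : ∀ x y x' y',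
      ConvexOn ℝ Set.univ fun t : ℝ × ℝ => L x y x' y' t.1 t.2)
    (l : ℝ) (hl : 0 < l)
    (P Q : Measure (X × Y)) (hP : IsProbabilityMeasure P) (hQ : IsProbabilityMeasure Q)
    (fP fQ : H)
    (hfP : ∀ g : H, shiftedRisk L Φ P fP + l * ‖fP‖ ^ 2
      ≤ shiftedRisk L Φ P g + l * ‖g‖ ^ 2)
    (hfQ : ∀ g : H, shiftedRisk L Φ Q fQ + l * ‖fQ‖ ^ 2
      ≤ shiftedRisk L Φ Q g + l * ‖g‖ ^ 2) :
    ‖fP - fQ‖ ≤ (1 / l) *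
      ‖(∫ z : (X × Y) × (X × Y),
          ((D₅L z.1.1 z.1.2 z.2.1 z.2.2 ⟪fP, Φ z.1.1⟫ ⟪fP, Φ z.2.1⟫) • Φ z.1.1
            + (D₆L z.1.1 z.1.2 z.2.1 z.2.2 ⟪fP, Φ z.1.1⟫ ⟪fP, Φ z.2.1⟫) • Φ z.2.1)
          ∂(P.prod P))
        - ∫ z : (X × Y) × (X × Y),
          ((D₅L z.1.1 z.1.2 z.2.1 z.2.2 ⟪fP, Φ z.1.1⟫ ⟪fP, Φ z.2.1⟫) • Φ z.1.1
            + (D₆L z.1.1 z.1.2 z.2.1 z.2.2 ⟪fP, Φ z.1.1⟫ ⟪fP, Φ z.2.1⟫) • Φ z.2.1)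
          ∂(Q.prod Q)‖ := by
  have : SecondCountableTopology X := UniformSpace.secondCountable_of_separable X
  exact rpl_representer_stability_general hL_meas hL₁ hLip hderiv hΦcont.stronglyMeasurable hκ
    hL_convex hl hfP (hfQ fP)
end
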